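/- Let k be a field and S = k[x₁,…,xₙ] a polynomial ring in n variables. If 𝓘 is an infinite collection of monomial ideals of S, then there exist two distinct ideals I, J ∈ 𝓘 with I ⊆ J. Equivalently, the poset of monomial ideals of S ordered by inclusion contains no infinite antichain. -/

import Mathlib

/-- An ideal of `k[x₁,…,xₙ]` is a *monomial ideal* if it is generated by a set of
monomials `x^u` with `u ∈ ℕⁿ`. -/
def IsMonomialIdeal {k : Type*} [Field k] {n : ℕ}
    (I : Ideal (MvPolynomial (Fin n) k)) : Prop :=
  ∃ U : Set (Fin n →₀ ℕ),
    I = Ideal.span ((fun u => MvPolynomial.monomial u (1 : k)) '' U)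

/-!
A monomial ideal is determined by the upper set of exponents lying above its generators, so it
suffices that the upper sets of `ℕⁿ` are well-quasi-ordered by reverse inclusion. Induct on `n`:
slicing an upper set of `ℕⁿ⁺¹` along the first coordinate gives an increasing sequence of upper
sets of `ℕⁿ`, which is eventually constant because a well-quasi-order is well-founded. Such a
sequence is encoded by a finite list together with its limit, and lists over a well-quasi-order are
again well-quasi-ordered by Higman's lemma. An embedding of lists may move entries to later
positions, but monotonicity of the sequences turns it into a comparison position by position.
-/

section Antitone

variable {α β : Type*}

theorem wellQuasiOrdered_sublistForall₂ {r : α → α → Prop} [IsPreorder α r]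
    (hr : WellQuasiOrdered r) : WellQuasiOrdered (List.SublistForall₂ r) := by
  have higman := Set.PartiallyWellOrderedOn.partiallyWellOrderedOn_sublistForall₂ r
    (Set.partiallyWellOrderedOn_univ_iff.2 hr)
  simpa [Set.partiallyWellOrderedOn_univ_iff] using higman

theorem exists_getElem_of_sublistForall₂ {r : α → β → Prop} {l₁ : List α} {l₂ : List β}
    (h : List.SublistForall₂ r l₁ l₂) (i : ℕ) (hi : i < l₁.length) :
    ∃ (j : ℕ) (hj : j < l₂.length), i ≤ j ∧ r l₁[i] l₂[j] := by
  obtain ⟨l, hl₁, hl₂⟩ := List.sublistForall₂_iff.1 h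
  obtain ⟨hlen, hr⟩ := List.forall₂_iff_get.1 hl₁
  obtain ⟨f, hf⟩ := List.sublist_iff_exists_orderEmbedding_getElem?_eq.1 hl₂
  have hfi : l₂[f i]? = some (l[i]'(hlen ▸ hi)) := by rw [← hf, List.getElem?_eq_getElem]
  obtain ⟨hj, heq⟩ := List.getElem?_eq_some_iff.1 hfi
  exact ⟨f i, hj, f.strictMono.le_apply, heq ▸ hr i hi (hlen ▸ hi)⟩

variable [Preorder β] {f g : ℕ → β}

theorem le_of_sublistForall₂_map_range (hg : Antitone g) {M N t : ℕ}
    (h : List.SublistForall₂ (· ≤ ·) ((List.range M).map f) ((List.range N).map g))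
    (ht : t < M) : f t ≤ g t := by
  obtain ⟨s, hs, hts, hle⟩ := exists_getElem_of_sublistForall₂ h t (by simpa using ht)
  simp only [List.getElem_map, List.getElem_range] at hle
  exact hle.trans (hg hts)

theorem exists_forall_le_of_antitone [WellFoundedLT β] (hf : Antitone f) :
    ∃ N, ∀ t, f N ≤ f t := by
  obtain ⟨_, ⟨N, rfl⟩, hmin⟩ := wellFounded_lt.has_min (Set.range f) (Set.range_nonempty f)
  refine ⟨N, fun t => ?_⟩
  rcases le_total t N with htN | hNt
  · exact hf htN
  · exact not_lt_iff_le_imp_ge.1 (hmin _ ⟨t, rfl⟩) (hf hNt)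

instance wellQuasiOrderedLE_subtype_antitone [WellQuasiOrderedLE β] :
    WellQuasiOrderedLE {f : ℕ → β // Antitone f} where
  wqo F := by
    have : IsPreorder (List β) (List.SublistForall₂ (· ≤ ·)) := { }
    choose N hN using fun m => exists_forall_le_of_antitone (F m).2
    obtain ⟨i, j, hij, hinit, hlim⟩ :=
      ((wellQuasiOrdered_sublistForall₂ wellQuasiOrdered_le).prod wellQuasiOrdered_le)
        fun m => ((List.range (N m)).map (F m).1, (F m).1 (N m))
    refine ⟨i, j, hij, fun t => ?_⟩
    rcases lt_or_ge t (N i) with ht | ht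
    · exact le_of_sublistForall₂_map_range (F j).2 hinit ht
    · calc (F i).1 t ≤ (F i).1 (N i) := (F i).2 ht
        _ ≤ (F j).1 (N j) := hlim
        _ ≤ (F j).1 t := hN j t

end Antitone

section UpperSet

variable {α β : Type*} [Preorder α] [Preorder β]

/-- The slice `{b | (a, b) ∈ U}` of an upper set `U` of a product at a first coordinate `a`, used
to view an upper set of `α × β` as a family of upper sets of `β`. -/
def upperSetSlice (U : UpperSet (α × β)) (a : α) : UpperSet β where
  carrier := {b | (a, b) ∈ U}
  upper' _ _ hb := U.upper (Prod.mk_le_mk.2 ⟨le_rfl, hb⟩)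

theorem antitone_upperSetSlice (U : UpperSet (α × β)) : Antitone (upperSetSlice U) :=
  fun _ _ ha _ => U.upper (Prod.mk_le_mk.2 ⟨ha, le_rfl⟩)

theorem le_of_upperSetSlice_le {U V : UpperSet (α × β)}
    (h : ∀ a, upperSetSlice U a ≤ upperSetSlice V a) : U ≤ V :=
  fun p hp => h p.1 hp

instance wellQuasiOrderedLE_upperSet_nat_prod [WellQuasiOrderedLE (UpperSet β)] :
    WellQuasiOrderedLE (UpperSet (ℕ × β)) where
  wqo F := by
    obtain ⟨i, j, hij, hle⟩ := wellQuasiOrdered_le fun m =>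
      (⟨upperSetSlice (F m), antitone_upperSetSlice (F m)⟩ :
        {f : ℕ → UpperSet β // Antitone f})
    exact ⟨i, j, hij, le_of_upperSetSlice_le hle⟩

theorem wellQuasiOrderedLE_upperSet_fin_nat (n : ℕ) :
    WellQuasiOrderedLE (UpperSet (Fin n → ℕ)) := by
  induction n with
  | zero =>
    have : Finite (UpperSet (Fin 0 → ℕ)) := .of_injective _ SetLike.coe_injective
    exact Finite.to_wellQuasiOrderedLE
  | succ n ih =>
    exact (UpperSet.map (Fin.consOrderIso fun _ => ℕ)).wellQuasiOrderedLE_iff.1 inferInstance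

instance wellQuasiOrderedLE_upperSet_finsupp_nat {σ : Type*} [Finite σ] :
    WellQuasiOrderedLE (UpperSet (σ →₀ ℕ)) := by
  obtain ⟨n, ⟨e⟩⟩ := Finite.exists_equiv_fin σ
  let reindex : (σ → ℕ) ≃o (Fin n → ℕ) :=
    { e.arrowCongr (.refl ℕ) with
      map_rel_iff' := fun {f g} => e.symm.forall_congr_right (q := fun i => f i ≤ g i) }
  exact (UpperSet.map (Finsupp.orderIsoFunOnFinite.trans reindex)).wellQuasiOrderedLE_iff.2
    (wellQuasiOrderedLE_upperSet_fin_nat n)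

end UpperSet

section MonomialIdeal

variable {σ R : Type*} [CommSemiring R]

theorem span_monomial_image_le_of_upperClosure_le {U V : Set (σ →₀ ℕ)}
    (h : upperClosure V ≤ upperClosure U) :
    Ideal.span ((fun u => MvPolynomial.monomial u (1 : R)) '' U) ≤
      Ideal.span ((fun u => MvPolynomial.monomial u (1 : R)) '' V) := by
  intro p hp
  rw [MvPolynomial.mem_ideal_span_monomial_image] at hp ⊢
  intro w hw
  obtain ⟨u, hu, huw⟩ := hp w hw
  exact h (mem_upperClosure.2 ⟨u, hu, huw⟩)

theorem partiallyWellOrderedOn_ge_span_monomial_image [Finite σ] :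
    {I : Ideal (MvPolynomial σ R) | ∃ U : Set (σ →₀ ℕ),
      I = Ideal.span ((fun u => MvPolynomial.monomial u (1 : R)) '' U)}.PartiallyWellOrderedOn
      (· ≥ ·) := by
  intro F
  choose U hU using fun m => (F m).2
  obtain ⟨i, j, hij, hle⟩ := wellQuasiOrdered_le fun m => upperClosure (U m)
  refine ⟨i, j, hij, ?_⟩
  change (F j).1 ≤ (F i).1
  rw [hU i, hU j]
  exact span_monomial_image_le_of_upperClosure_le hle

theorem monomialIdeals_no_infinite_antichain_general [Finite σ]
    (𝓘 : Set (Ideal (MvPolynomial σ R)))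
    (hmono : ∀ I ∈ 𝓘, ∃ U : Set (σ →₀ ℕ),
      I = Ideal.span ((fun u => MvPolynomial.monomial u (1 : R)) '' U))
    (hinf : 𝓘.Infinite) :
    ∃ I ∈ 𝓘, ∃ J ∈ 𝓘, I ≠ J ∧ I ≤ J := by
  obtain ⟨i, j, hij, hle⟩ := partiallyWellOrderedOn_ge_span_monomial_image.exists_lt
    fun m => hmono _ (hinf.natEmbedding _ m).2
  refine ⟨_, (hinf.natEmbedding _ j).2, _, (hinf.natEmbedding _ i).2, ?_, hle⟩
  exact Subtype.coe_injective.ne ((hinf.natEmbedding _).injective.ne hij.ne')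

end MonomialIdeal

/-- **Antichains of monomial ideals are finite.**  If `𝓘` is an infinite collection of
monomial ideals of `k[x₁,…,xₙ]`, then there exist two distinct ideals `I, J ∈ 𝓘`
with `I ⊆ J`. -/
theorem monomialIdeals_no_infinite_antichain {k : Type*} [Field k] {n : ℕ}
    (𝓘 : Set (Ideal (MvPolynomial (Fin n) k)))
    (hmono : ∀ I ∈ 𝓘, IsMonomialIdeal I) (hinf : 𝓘.Infinite) :
    ∃ I ∈ 𝓘, ∃ J ∈ 𝓘, I ≠ J ∧ I ≤ J :=
  monomialIdeals_no_infinite_antichain_general 𝓘 hmono hinf
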